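/- arXiv:2010.16371 — 7 statements merged into one kernel-verified Lean document; each statement's English description precedes it below -/
import Mathlib

section
/- Let Ω = [[ω₁₁, ω₁₂],[ω₁₂, ω₂₂]] be a 2×2 complex symmetric matrix whose imaginary part is positive definite. Then ω₁₁ ≠ 0 and Im(-1/ω₁₁) · Im((ω₁₁ω₂₂ - ω₁₂²)/ω₁₁) > (Im(ω₁₂/ω₁₁))². -/
/-- **Lemma (Siegel upper half-space inequality).**
Let `Ω = [[ω₁₁, ω₁₂],[ω₁₂, ω₂₂]]` be a 2×2 complex symmetric matrix whose imaginary part is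
positive definite.  Then `ω₁₁ ≠ 0` and
`Im(-1/ω₁₁) · Im((ω₁₁ω₂₂ - ω₁₂²)/ω₁₁) > (Im(ω₁₂/ω₁₁))²`. -/
theorem stmt_0 (ω11 ω12 ω22 : ℂ)
    (hpos : (!![ω11.im, ω12.im; ω12.im, ω22.im] : Matrix (Fin 2) (Fin 2) ℝ).PosDef) :
    ω11 ≠ 0 ∧
      ((ω12 / ω11).im) ^ 2 < (-1 / ω11).im * (((ω11 * ω22 - ω12 ^ 2) / ω11).im) := by
  have hd := hpos.det_pos
  have hb := hpos.diag_pos (i := 0)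
  simp only [Matrix.det_fin_two_of] at hd
  simp at hb
  obtain ⟨a, b⟩ := ω11
  obtain ⟨c, d⟩ := ω12
  obtain ⟨e, f⟩ := ω22
  simp only at hd hb
  have hN : 0 < a * a + b * b := by nlinarith [mul_self_nonneg a, mul_pos hb hb]
  refine ⟨fun h => hb.ne' (congrArg Complex.im h), ?_⟩
  rw [← sub_pos]
  have key : 0 < (b * f - d * d) / (a * a + b * b) := div_pos hd hN
  convert key using 1
  simp [Complex.div_im, Complex.normSq_apply, pow_two]
  have := hN.ne'
  field_simp
  ring
end

section
/- Let Ω = [[ω₁₁, ω₁₂],[ω₁₂, ω₂₂]] be a 2×2 complex symmetric matrix whose imaginary part is positive definite. Then ω₁₁ ≠ 0, and there exist τ₁, τ₂ ∈ ℂ with Im τ₁ > 0 > Im τ₂ such that ω₁₁z² + 2ω₁₂z + ω₂₂ = ω₁₁(z - τ₁)(z - τ₂) for all z ∈ ℂ. In other words, the quadratic polynomial 2·Q_Ω((z,1)ᵀ) has exactly one root in the upper half-plane and one root in the lower half-plane. -/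
theorem aux_roots (a b c p q : ℂ) (h2 : 0 < a.im * c.im - b.im * b.im)
    (hb : 2 * b = -(a * (p + q))) (hc : c = a * p * q) : p.im * q.im < 0 := by
  have hb' := congrArg Complex.im hb
  simp at hb'
  have hbi : b.im = -(a.re * (p.im + q.im) + a.im * (p.re + q.re)) / 2 := by linarith
  rw [hbi, hc] at h2
  simp at h2
  by_contra hn
  push Not at hn
  have h3 : 0 ≤ (p.im * q.im) * (a.re ^ 2 + a.im ^ 2) := by positivity
  nlinarith [sq_nonneg (a.im * (p.re - q.re) + a.re * (p.im - q.im))]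

/-- **Lemma (roots of the quadratic form).**
Let `Ω = [[ω₁₁, ω₁₂],[ω₁₂, ω₂₂]]` be a 2×2 complex symmetric matrix whose imaginary part is
positive definite.  Then `ω₁₁ ≠ 0` and there exist `τ₁, τ₂ ∈ ℂ` with `Im τ₁ > 0 > Im τ₂`
such that `ω₁₁z² + 2ω₁₂z + ω₂₂ = ω₁₁(z - τ₁)(z - τ₂)` for all `z ∈ ℂ`. -/
theorem stmt_2 (ω11 ω12 ω22 : ℂ)
    (hpos : (!![ω11.im, ω12.im; ω12.im, ω22.im] : Matrix (Fin 2) (Fin 2) ℝ).PosDef) :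
    ω11 ≠ 0 ∧
      ∃ τ1 τ2 : ℂ, 0 < τ1.im ∧ τ2.im < 0 ∧
        ∀ z : ℂ, ω11 * z ^ 2 + 2 * ω12 * z + ω22 = ω11 * (z - τ1) * (z - τ2) := by
  have h1 : 0 < ω11.im := by simpa using hpos.diag_pos (i := 0)
  have h2 := hpos.det_pos
  rw [Matrix.det_fin_two_of] at h2
  have h0 : ω11 ≠ 0 := by
    rintro rfl
    simp at h1
  refine ⟨h0, ?_⟩
  obtain ⟨s, hs⟩ := IsAlgClosed.exists_pow_nat_eq (ω12 ^ 2 - ω11 * ω22) (n := 2) (by norm_num)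
  obtain ⟨p, hp⟩ : ∃ p, p = (-ω12 + s) / ω11 := ⟨_, rfl⟩
  obtain ⟨q, hq⟩ : ∃ q, q = (-ω12 - s) / ω11 := ⟨_, rfl⟩
  have hb : 2 * ω12 = -(ω11 * (p + q)) := by
    rw [hp, hq]
    field_simp
    ring
  have hc : ω22 = ω11 * p * q := by
    rw [hp, hq]
    field_simp
    linear_combination hs
  have hpq := aux_roots _ _ _ p q h2 hb hc
  rcases mul_neg_iff.mp hpq with ⟨h, h'⟩ | ⟨h, h'⟩
  · refine ⟨p, q, h, h', fun z => ?_⟩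
    linear_combination z * hb + hc
  · refine ⟨q, p, h', h, fun z => ?_⟩
    linear_combination z * hb + hc
end

section
/- Let z ∈ ℂ with Re z > 0 and s ∈ ℂ with Re s > 0. Then ∫₀^∞ exp(-tz)·(tz)^{s-1}·z dt = Γ(s), where (tz)^{s-1} denotes the principal complex power and Γ is the complex Gamma function. (Equivalently: the integral of e^{-u}u^{s-1} du along the ray from 0 through z equals Γ(s).) -/
open MeasureTheory Set Filter Topology in
lemma aux_int (a : ℂ) (ha : -1 < a.re) (z : ℂ) (hz : 0 < z.re) :
    IntegrableOn (fun t : ℝ => (t : ℂ) ^ a * Complex.exp (-((t : ℂ) * z))) (Ioi 0) := by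
  have h := integrableOn_rpow_mul_exp_neg_mul_rpow (p := 1) ha one_pos hz
  refine Integrable.mono' h ?_ ?_
  · refine ContinuousOn.aestronglyMeasurable ?_ measurableSet_Ioi
    refine ContinuousOn.mul ?_ (by fun_prop)
    intro t ht
    exact (Complex.continuousAt_ofReal_cpow_const t a (Or.inr (ne_of_gt ht))).continuousWithinAt
  · filter_upwards [ae_restrict_mem measurableSet_Ioi] with t ht
    rw [norm_mul, Complex.norm_cpow_eq_rpow_re_of_pos ht, Complex.norm_exp]
    simp [mul_comm]

open MeasureTheory Set Filter Topology in
lemma aux_deriv (s : ℂ) (hs : 0 < s.re) (z : ℂ) (hz : 0 < z.re) :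
    DifferentiableAt ℂ (fun z : ℂ =>
      ∫ t in Ioi (0 : ℝ), (t : ℂ) ^ (s - 1) * Complex.exp (-((t : ℂ) * z))) z := by
  have hre : ∀ w ∈ Metric.ball z (z.re / 2), z.re / 2 < w.re := by
    intro w hw
    rw [mem_ball_iff_norm'] at hw
    have := (Complex.re_le_norm (z - w)).trans_lt hw
    simp at this
    linarith
  have hs1 : -1 < (s - 1).re := by simpa using hs
  have hb := integrableOn_rpow_mul_exp_neg_mul_rpow (p := 1) (s := s.re) (b := z.re / 2)
    (by linarith) one_pos (by linarith)
  have := hasDerivAt_integral_of_dominated_loc_of_deriv_le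
    (μ := volume.restrict (Ioi (0 : ℝ))) (𝕜 := ℂ)
    (F := fun (z : ℂ) (t : ℝ) => (t : ℂ) ^ (s - 1) * Complex.exp (-((t : ℂ) * z)))
    (F' := fun (z : ℂ) (t : ℝ) => (t : ℂ) ^ (s - 1) * (Complex.exp (-((t : ℂ) * z)) * -((t : ℂ) * 1)))
    (x₀ := z) (s := Metric.ball z (z.re / 2))
    (bound := fun t => t ^ s.re * Real.exp (-(z.re / 2) * t ^ (1 : ℝ)))
    (Metric.ball_mem_nhds _ (by linarith)) ?_ (aux_int _ hs1 z hz) ?_ ?_ hb ?_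
  · exact this.2.differentiableAt
  · filter_upwards [Metric.ball_mem_nhds z (show 0 < z.re / 2 by linarith)] with w hw
    exact (aux_int _ hs1 w (by linarith [hre w hw])).aestronglyMeasurable
  · have h1 := (aux_int _ hs1 z hz).aestronglyMeasurable
    have h2 : AEStronglyMeasurable (fun t : ℝ => -((t : ℂ) * 1)) (volume.restrict (Ioi (0 : ℝ))) := by
      apply Continuous.aestronglyMeasurable
      fun_prop
    have h3 := h1.mul h2
    refine h3.congr (ae_of_all _ fun t => ?_)
    simp [mul_assoc]
  · filter_upwards [ae_restrict_mem measurableSet_Ioi] with t ht w hw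
    have ht' : 0 < t := ht
    rw [norm_mul, norm_mul, Complex.norm_cpow_eq_rpow_re_of_pos ht', Complex.norm_exp]
    have e1 : ‖-((t : ℂ) * 1)‖ = t := by simp [abs_of_pos ht']
    rw [e1, mul_comm (Real.exp _) t, ← mul_assoc]
    have e2 : t ^ (s - 1).re * t = t ^ s.re := by
      nth_rewrite 2 [← Real.rpow_one t]
      rw [← Real.rpow_add ht']
      simp
    rw [e2]
    gcongr
    simp
    nlinarith [hre w hw]
  · refine ae_of_all _ fun t w hw => ?_
    exact ((((hasDerivAt_id w).const_mul (t : ℂ)).neg).cexp).const_mul _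

open MeasureTheory Set Filter Topology in
lemma aux_eq (s : ℂ) (hs : 0 < s.re) (z : ℂ) (hz : 0 < z.re) :
    z ^ s * ∫ t in Ioi (0 : ℝ), (t : ℂ) ^ (s - 1) * Complex.exp (-((t : ℂ) * z))
      = Complex.Gamma s := by
  have hU : IsOpen {z : ℂ | 0 < z.re} := isOpen_lt continuous_const Complex.continuous_re
  have hf : AnalyticOnNhd ℂ (fun z : ℂ => z ^ s *
      ∫ t in Ioi (0 : ℝ), (t : ℂ) ^ (s - 1) * Complex.exp (-((t : ℂ) * z))) {z : ℂ | 0 < z.re} := by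
    refine DifferentiableOn.analyticOnNhd (fun w hw => ?_) hU
    refine DifferentiableAt.differentiableWithinAt (DifferentiableAt.mul ?_ (aux_deriv s hs w hw))
    exact (differentiableAt_id).cpow_const (Or.inl hw)
  refine hf.eqOn_of_preconnected_of_frequently_eq (g := fun _ => Complex.Gamma s) analyticOnNhd_const
    (convex_halfSpace_re_gt 0).isPreconnected (z₀ := 1) (by simp) ?_ hz
  have hr : ∀ r : ℝ, 0 < r → (r : ℂ) ^ s *
      (∫ t in Ioi (0 : ℝ), (t : ℂ) ^ (s - 1) * Complex.exp (-((t : ℂ) * r))) = Complex.Gamma s := by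
    intro r hr
    have := Complex.integral_cpow_mul_exp_neg_mul_Ioi hs hr
    simp_rw [mul_comm (r : ℂ)] at this
    rw [this, ← mul_assoc, ← Complex.ofReal_one, ← Complex.ofReal_div,
      ← Complex.mul_cpow_ofReal_nonneg hr.le (by positivity), ← Complex.ofReal_mul,
      mul_one_div_cancel hr.ne']
    simp
  have ht : Tendsto (fun r : ℝ => (r : ℂ)) (𝓝[>] 1) (𝓝[≠] (1 : ℂ)) := by
    refine tendsto_nhdsWithin_iff.2 ⟨?_, ?_⟩
    · have : Tendsto (fun r : ℝ => (r : ℂ)) (𝓝 1) (𝓝 ((1 : ℝ) : ℂ)) :=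
        Complex.continuous_ofReal.tendsto 1
      simpa using this.mono_left nhdsWithin_le_nhds
    · filter_upwards [self_mem_nhdsWithin] with r hr
      have : (1 : ℝ) < r := hr
      simpa using this.ne'
  refine ht.frequently (Eventually.frequently ?_)
  filter_upwards [self_mem_nhdsWithin] with r h
  exact hr r (lt_trans one_pos h)

/-- **Gamma integral along a ray.**
Let `z ∈ ℂ` with `Re z > 0` and `s ∈ ℂ` with `Re s > 0`.  Then
`∫₀^∞ exp(-tz)·(tz)^{s-1}·z dt = Γ(s)` (principal complex powers), i.e. the integral of
`e^{-u}u^{s-1}` along the ray from `0` through `z` equals `Γ(s)`. -/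
theorem stmt_4 (z s : ℂ) (hz : 0 < z.re) (hs : 0 < s.re) :
    ∫ t in Set.Ioi (0 : ℝ), Complex.exp (-((t : ℂ) * z)) * ((t : ℂ) * z) ^ (s - 1) * z
      = Complex.Gamma s := by
  have hz0 : z ≠ 0 := by
    rintro rfl
    simp at hz
  rw [← aux_eq s hs z hz, ← MeasureTheory.integral_const_mul]
  refine MeasureTheory.setIntegral_congr_fun measurableSet_Ioi fun t ht => ?_
  have ht' : 0 < t := ht
  have ht0 : (t : ℂ) ≠ 0 := by exact_mod_cast ht'.ne'
  have e : ((t : ℂ) * z) ^ (s - 1) = (t : ℂ) ^ (s - 1) * z ^ (s - 1) := by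
    rw [Complex.cpow_def_of_ne_zero (mul_ne_zero ht0 hz0), Complex.cpow_def_of_ne_zero ht0,
      Complex.cpow_def_of_ne_zero hz0, Complex.log_ofReal_mul ht' hz0, ← Complex.exp_add,
      Complex.ofReal_log ht'.le, add_mul]
  have e2 : z ^ s = z ^ (s - 1) * z := by
    rw [Complex.cpow_sub _ _ hz0, Complex.cpow_one, div_mul_cancel₀ _ hz0]
  simp only [e, e2]
  ring
end

section
/- Let α, β ∈ ℂ with Im β > 0 and Re(α² - 2iβ) > 0. Then ∫₀^∞ E(α·√t)·exp(2πiβt) dt = -α / (4πiβ·(α² - 2iβ)^{1/2}), where (α² - 2iβ)^{1/2} denotes the principal branch of the complex square root. -/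
/-- `E(z) := ∫₀^z e^{-πu²} du`, the entire antiderivative of `e^{-πz²}` vanishing at `0`,
realised as `∫₀¹ z·exp(-π t² z²) dt`. -/
noncomputable def E (z : ℂ) : ℂ :=
  ∫ t in (0 : ℝ)..1, z * Complex.exp (-(Real.pi : ℂ) * (t : ℂ) ^ 2 * z ^ 2)

open MeasureTheory Filter Topology in
theorem E_mul_real (α : ℂ) (x : ℝ) :
    E (α * (x : ℂ)) = ∫ v in (0 : ℝ)..x, α * Complex.exp (-(Real.pi : ℂ) * α ^ 2 * (v : ℂ) ^ 2) := by
  have := intervalIntegral.smul_integral_comp_mul_left (a := 0) (b := 1)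
    (fun v : ℝ => α * Complex.exp (-(Real.pi : ℂ) * α ^ 2 * (v : ℂ) ^ 2)) x
  rw [mul_zero, mul_one] at this
  rw [← this, E, ← intervalIntegral.integral_smul]
  congr 1
  ext t
  rw [Complex.real_smul]
  push_cast
  rw [show -(Real.pi : ℂ) * (t : ℂ) ^ 2 * (α * x) ^ 2 = -(Real.pi : ℂ) * α ^ 2 * (x * t : ℂ) ^ 2 by ring]
  ring

theorem E_hasDeriv (α : ℂ) (x : ℝ) :
    HasDerivAt (fun x : ℝ => E (α * (x : ℂ)))
      (α * Complex.exp (-(Real.pi : ℂ) * α ^ 2 * (x : ℂ) ^ 2)) x := by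
  have hc : Continuous (fun v : ℝ => α * Complex.exp (-(Real.pi : ℂ) * α ^ 2 * (v : ℂ) ^ 2)) := by
    fun_prop
  have h1 : (fun x : ℝ => E (α * (x : ℂ))) = fun x : ℝ =>
      ∫ v in (0 : ℝ)..x, α * Complex.exp (-(Real.pi : ℂ) * α ^ 2 * (v : ℂ) ^ 2) :=
    funext (E_mul_real α)
  rw [h1]
  exact hc.integral_hasStrictDerivAt 0 x |>.hasDerivAt

theorem E_bound (α s : ℂ) (m : ℝ) (hs : m ≤ s.re) (hs' : m ≤ (α ^ 2 + s).re)
    (x : ℝ) (hx : 0 ≤ x) :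
    ‖E (α * (x : ℂ)) * Complex.exp (-(Real.pi : ℂ) * s * (x : ℂ) ^ 2)‖
      ≤ ‖α‖ * x * Real.exp (-(Real.pi * m) * x ^ 2) := by
  rw [E, ← intervalIntegral.integral_mul_const]
  refine (intervalIntegral.norm_integral_le_of_norm_le_const
    (C := ‖α‖ * x * Real.exp (-(Real.pi * m) * x ^ 2)) ?_).trans (by simp)
  intro t ht
  rw [Set.uIoc_of_le zero_le_one] at ht
  obtain ⟨h0, h1⟩ := ht
  rw [mul_assoc, ← Complex.exp_add, norm_mul, norm_mul, Complex.norm_real, Complex.norm_exp,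
    Real.norm_of_nonneg hx]
  refine mul_le_mul_of_nonneg_left (Real.exp_le_exp.2 ?_) (by positivity)
  have e : -(Real.pi : ℂ) * (t : ℂ) ^ 2 * (α * x) ^ 2 + -(Real.pi : ℂ) * s * (x : ℂ) ^ 2
      = ((-(Real.pi * x ^ 2 * t ^ 2) : ℝ) : ℂ) * (α ^ 2 + s)
        + ((-(Real.pi * x ^ 2 * (1 - t ^ 2)) : ℝ) : ℂ) * s := by
    push_cast; ring
  rw [e, Complex.add_re, Complex.re_ofReal_mul, Complex.re_ofReal_mul]
  have a1 : 0 ≤ Real.pi * x ^ 2 * t ^ 2 := by positivity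
  have a2 : 0 ≤ Real.pi * x ^ 2 * (1 - t ^ 2) := by
    have : 0 ≤ 1 - t ^ 2 := by nlinarith
    positivity
  nlinarith [mul_le_mul_of_nonneg_left hs a2, mul_le_mul_of_nonneg_left hs' a1]

open MeasureTheory Filter Topology in
theorem main_int (α s : ℂ) (hs : 0 < s.re) (hs' : 0 < (α ^ 2 + s).re) :
    ∫ x in Set.Ioi (0 : ℝ),
        (2 * x : ℂ) * (E (α * (x : ℂ)) * Complex.exp (-(Real.pi : ℂ) * s * (x : ℂ) ^ 2))
      = α / (2 * Real.pi * s * (α ^ 2 + s) ^ ((1 : ℂ) / 2)) := by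
  have hpi : (Real.pi : ℂ) ≠ 0 := by exact_mod_cast Real.pi_ne_zero
  have hs0 : s ≠ 0 := by rintro rfl; simp at hs
  have hw0 : α ^ 2 + s ≠ 0 := by intro h; rw [h] at hs'; simp at hs'
  obtain ⟨m, hm, hm1, hm2⟩ : ∃ m : ℝ, 0 < m ∧ m ≤ s.re ∧ m ≤ (α ^ 2 + s).re :=
    ⟨min s.re (α ^ 2 + s).re, lt_min hs hs', min_le_left _ _, min_le_right _ _⟩
  have hpm : 0 < Real.pi * m := by positivity
  have hEc : Continuous (fun x : ℝ => E (α * (x : ℂ))) :=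
    continuous_iff_continuousAt.2 fun x => (E_hasDeriv α x).continuousAt
  have hb : 0 < ((Real.pi : ℂ) * (α ^ 2 + s)).re := by
    rw [Complex.re_ofReal_mul]; positivity
  have hG := integral_gaussian_complex_Ioi hb
  have hGi : IntegrableOn (fun x : ℝ => Complex.exp (-((Real.pi : ℂ) * (α ^ 2 + s)) * (x : ℂ) ^ 2))
      (Set.Ioi 0) := (integrable_cexp_neg_mul_sq hb).integrableOn
  have hI1 : IntegrableOn (fun x : ℝ => (2 * x : ℂ) *
      (E (α * (x : ℂ)) * Complex.exp (-(Real.pi : ℂ) * s * (x : ℂ) ^ 2))) (Set.Ioi 0) := by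
    have hd := (integrableOn_rpow_mul_exp_neg_mul_sq hpm (s := 2) (by norm_num)).const_mul (2 * ‖α‖)
    refine Integrable.mono' hd ?_ ?_
    · exact (by fun_prop : Continuous (fun x : ℝ => (2 * x : ℂ) *
        (E (α * (x : ℂ)) * Complex.exp (-(Real.pi : ℂ) * s * (x : ℂ) ^ 2)))).aestronglyMeasurable
    · filter_upwards [self_mem_ae_restrict measurableSet_Ioi] with x hx
      have hx0 : 0 ≤ x := le_of_lt hx
      rw [norm_mul, norm_mul, Complex.norm_real, Real.norm_of_nonneg hx0, Complex.norm_ofNat,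
        Real.rpow_two]
      have := mul_le_mul_of_nonneg_left (E_bound α s m hm1 hm2 x hx0) (show 0 ≤ 2 * x by positivity)
      refine this.trans (le_of_eq ?_)
      ring
  have key := integral_Ioi_of_hasDerivAt_of_tendsto (a := 0) (m := 0)
    (f := fun x : ℝ => E (α * (x : ℂ)) * Complex.exp (-(Real.pi : ℂ) * s * (x : ℂ) ^ 2))
    (f' := fun x : ℝ => α * Complex.exp (-((Real.pi : ℂ) * (α ^ 2 + s)) * (x : ℂ) ^ 2)
      - Real.pi * s * ((2 * x : ℂ) * (E (α * (x : ℂ)) * Complex.exp (-(Real.pi : ℂ) * s * (x : ℂ) ^ 2))))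
    (by fun_prop) ?_ ((hGi.const_mul α).sub (hI1.const_mul _)) ?_
  · rw [integral_sub (hGi.const_mul α) (hI1.const_mul _), integral_const_mul, integral_const_mul,
      hG] at key
    have hE0 : E (α * ((0 : ℝ) : ℂ)) = 0 := by simp [E]
    rw [hE0, zero_mul, sub_zero] at key
    have e1 : (Real.pi : ℂ) / (Real.pi * (α ^ 2 + s)) = (α ^ 2 + s)⁻¹ := by field_simp
    have harg : (α ^ 2 + s).arg ≠ Real.pi := by
      intro h
      rw [Complex.arg_eq_pi_iff] at h
      linarith [h.1]
    rw [e1, Complex.inv_cpow _ _ harg] at key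
    have hp0 : (α ^ 2 + s) ^ ((1 : ℂ) / 2) ≠ 0 := by
      rw [Ne, Complex.cpow_eq_zero_iff]; exact fun h => hw0 h.1
    generalize (α ^ 2 + s) ^ ((1 : ℂ) / 2) = q at *
    rw [eq_div_iff (by simp [hpi, hs0, hp0])]
    rw [sub_eq_zero] at key
    linear_combination (-2 * q) * key + α * (mul_inv_cancel₀ hp0)
  · intro x _
    have hsq : HasDerivAt (fun x : ℝ => -(Real.pi : ℂ) * s * (x : ℂ) ^ 2)
        (-(Real.pi : ℂ) * s * (2 * x)) x := by
      have := ((hasDerivAt_pow 2 (x : ℂ)).comp_ofReal).const_mul (-(Real.pi : ℂ) * s)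
      simpa using this
    have := (E_hasDeriv α x).mul hsq.cexp
    refine this.congr_deriv ?_
    rw [show -((Real.pi : ℂ) * (α ^ 2 + s)) * (x : ℂ) ^ 2 =
      -(Real.pi : ℂ) * α ^ 2 * (x : ℂ) ^ 2 + -(Real.pi : ℂ) * s * (x : ℂ) ^ 2 by ring, Complex.exp_add]
    ring
  · have ht : Tendsto (fun x : ℝ => ‖α‖ * (x ^ (1 : ℝ) * Real.exp (-(Real.pi * m) * x ^ 2))) atTop
        (𝓝 (‖α‖ * 0)) := by
      refine Tendsto.const_mul _ ?_
      have := rpow_mul_exp_neg_mul_sq_isLittleO_exp_neg hpm 1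
      refine this.isBigO.trans_tendsto ?_
      refine Real.tendsto_exp_atBot.comp ?_
      exact (tendsto_id.const_mul_atTop_of_neg (by norm_num))
    rw [mul_zero] at ht
    refine squeeze_zero_norm' ?_ ht
    filter_upwards [eventually_ge_atTop 0] with x hx
    refine (E_bound α s m hm1 hm2 x hx).trans (le_of_eq ?_)
    rw [Real.rpow_one]; ring

/-- **Lemma.**  For `α, β ∈ ℂ` with `Im β > 0` and `Re(α² - 2iβ) > 0`,
`∫₀^∞ E(α√t)·e(βt) dt = -α / (4πiβ·(α² - 2iβ)^{1/2})` (principal square root). -/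
theorem stmt_5 (α β : ℂ) (hβ : 0 < β.im) (h : 0 < (α ^ 2 - 2 * Complex.I * β).re) :
    ∫ t in Set.Ioi (0 : ℝ),
        E (α * (Real.sqrt t : ℂ)) * Complex.exp (2 * (Real.pi : ℂ) * Complex.I * β * (t : ℂ))
      = -α / (4 * (Real.pi : ℂ) * Complex.I * β * (α ^ 2 - 2 * Complex.I * β) ^ ((1 : ℂ) / 2)) := by
  have hm := main_int α (-2 * Complex.I * β) (by simpa using hβ)
    (by rwa [show α ^ 2 + -2 * Complex.I * β = α ^ 2 - 2 * Complex.I * β by ring])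
  rw [show α ^ 2 + -2 * Complex.I * β = α ^ 2 - 2 * Complex.I * β by ring] at hm
  rw [← MeasureTheory.integral_comp_rpow_Ioi_of_pos (p := 2) two_pos]
  trans
  · refine Eq.trans ?_ hm
    refine MeasureTheory.setIntegral_congr_fun measurableSet_Ioi fun x hx => ?_
    have hx0 : 0 ≤ x := le_of_lt hx
    have : (2 : ℝ) - 1 = 1 := by norm_num
    simp only [this, Real.rpow_one, Real.rpow_two, Real.sqrt_sq hx0, Complex.real_smul]
    push_cast
    congr 3
    ring
  · rw [neg_div, ← div_neg]
    congr 1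
    ring
end

section
/- Let M and N be real symmetric 2×2 matrices with det M < 0 (so M has signature (1,1)), let Ω = iM + N with (1,1)-entry ω₁₁, and let c₁, c₂ ∈ ℝ² with c₁ᵀMc₁ < 0 and c₂ᵀMc₂ < 0 lie in the same connected component of the cone {c ∈ ℝ² : cᵀMc < 0}. Let p₁ ∈ ℝ and s ∈ ℂ with Re s > 1/2. Then ∫₀^∞ ( Σ_{n∈ℤ, n≠0} ρ_M^{c₁,c₂}((n√t, 0)ᵀ) · e(½ω₁₁n²t + p₁n) ) · t^{s-1} dt = (Li_{2s}(e(p₁)) - Li_{2s}(e(-p₁))) · ∫₀^∞ ρ_M^{c₁,c₂}((√t, 0)ᵀ) · e(½ω₁₁t) · t^{s-1} dt, where Li_w(z) := Σ_{n=1}^∞ z^n/n^w (convergent here since |e(±p₁)| = 1 and Re(2s) > 1). -/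
open Matrix

/-- `e(z) := exp(2πiz)`. -/
noncomputable def ec (z : ℂ) : ℂ := Complex.exp (2 * (Real.pi : ℂ) * Complex.I * z)

/-- `ρ_M^c(v) := E(cᵀMv / √(-½cᵀMc))`. -/
noncomputable def rho (M : Matrix (Fin 2) (Fin 2) ℝ) (c : Fin 2 → ℝ) (v : Fin 2 → ℂ) : ℂ :=
  E (((fun i => (c i : ℂ)) ⬝ᵥ (M.map Complex.ofReal).mulVec v) /
      (Real.sqrt (-(1 / 2) * (c ⬝ᵥ M.mulVec c)) : ℂ))

/-- `Li_w(z) := Σ_{n=1}^∞ z^n/n^w`, the polylogarithm (principal powers). -/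
noncomputable def Li (w z : ℂ) : ℂ := ∑' n : ℕ, z ^ (n + 1) / ((n : ℂ) + 1) ^ w

section Helpers

open MeasureTheory Set Filter Topology

lemma ec_norm (p : ℝ) : ‖ec (p : ℂ)‖ = 1 := by
  unfold ec
  have : 2 * (Real.pi : ℂ) * Complex.I * p = ((2 * Real.pi * p : ℝ) : ℂ) * Complex.I := by
    push_cast; ring
  rw [this, Complex.norm_exp_ofReal_mul_I]

lemma ec_pow (p : ℂ) (k : ℕ) : ec (p * k) = ec p ^ k := by
  unfold ec
  rw [← Complex.exp_nat_mul]
  congr 1; ring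

lemma core_conv (F : ℝ → ℂ) (hcont : Continuous F) (C δ : ℝ) (hδ : 0 < δ)
    (hb : ∀ x : ℝ, 0 ≤ x → ‖F x‖ ≤ C * x * Real.exp (-δ * x ^ 2)) (s : ℂ) (hs : 1 / 2 < s.re) :
    MellinConvergent (fun t => F (Real.sqrt t)) s := by
  unfold MellinConvergent
  have h1 := (integrableOn_rpow_mul_exp_neg_mul_rpow (p := 1) (s := s.re - 1 / 2) (b := δ)
    (by linarith) one_pos hδ).const_mul C
  refine Integrable.mono' h1 ?_ ?_
  · refine ContinuousOn.aestronglyMeasurable ?_ measurableSet_Ioi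
    refine ContinuousOn.smul (f := fun t : ℝ => (t : ℂ) ^ (s - 1)) ?_ (hcont.comp Real.continuous_sqrt).continuousOn
    intro t ht
    exact (Complex.continuousAt_ofReal_cpow_const t (s - 1)
      (Or.inr (ne_of_gt ht))).continuousWithinAt
  · refine (ae_restrict_iff' measurableSet_Ioi).2 (Eventually.of_forall fun t ht => ?_)
    have ht' : (0 : ℝ) < t := ht
    rw [norm_smul, Complex.norm_cpow_eq_rpow_re_of_pos ht']
    have h2 := hb (Real.sqrt t) (Real.sqrt_nonneg t)
    rw [Real.sq_sqrt ht'.le] at h2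
    calc _ ≤ t ^ (s - 1).re * (C * Real.sqrt t * Real.exp (-δ * t)) := by gcongr
      _ = C * ((t ^ (s - 1).re * Real.sqrt t) * Real.exp (-δ * t)) := by ring
      _ = _ := by
        rw [Real.sqrt_eq_rpow, ← Real.rpow_add ht', Real.rpow_one]
        simp only [Complex.sub_re, Complex.one_re]
        congr 3
        ring_nf

lemma core_norm (G : ℝ → ℂ) (s : ℂ) (a : ℝ) (ha : 0 < a) :
    ∫ t in Ioi (0 : ℝ), ‖(t : ℂ) ^ (s - 1) • G (a * t)‖ =
      a ^ (-s.re) * ∫ t in Ioi (0 : ℝ), ‖(t : ℂ) ^ (s - 1) • G t‖ := by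
  have h := integral_comp_mul_left_Ioi (fun t : ℝ => ‖(t : ℂ) ^ (s - 1) • G t‖) 0 ha
  rw [mul_zero] at h
  have h2 : ∫ t in Ioi (0 : ℝ), ‖(t : ℂ) ^ (s - 1) • G (a * t)‖ =
      ∫ t in Ioi (0 : ℝ), a ^ (1 - s.re) * ‖((a * t : ℝ) : ℂ) ^ (s - 1) • G (a * t)‖ := by
    refine setIntegral_congr_fun measurableSet_Ioi fun t ht => ?_
    have ht' : (0 : ℝ) < t := ht
    simp only [norm_smul]
    rw [Complex.norm_cpow_eq_rpow_re_of_pos ht', Complex.norm_cpow_eq_rpow_re_of_pos (mul_pos ha ht'),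
      Real.mul_rpow ha.le ht'.le, ← mul_assoc, ← mul_assoc, ← Real.rpow_add ha]
    simp
  rw [h2, integral_const_mul, h, smul_eq_mul, ← mul_assoc, ← Real.rpow_neg_one, ← Real.rpow_add ha]
  congr 2; ring

lemma core (F : ℝ → ℂ) (hodd : ∀ x, F (-x) = - F x) (hcont : Continuous F)
    (C δ : ℝ) (hδ : 0 < δ)
    (hb : ∀ x : ℝ, 0 ≤ x → ‖F x‖ ≤ C * x * Real.exp (-δ * x ^ 2))
    (p : ℝ) (s : ℂ) (hs : 1 / 2 < s.re) :
    ∫ t in Ioi (0 : ℝ), (∑' n : {n : ℤ // n ≠ 0},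
        F (((n : ℤ) : ℝ) * Real.sqrt t) * ec ((p : ℂ) * ((n : ℤ) : ℂ))) * (t : ℂ) ^ (s - 1)
      = (Li (2 * s) (ec (p : ℂ)) - Li (2 * s) (ec (-(p : ℂ)))) *
        ∫ t in Ioi (0 : ℝ), F (Real.sqrt t) * (t : ℂ) ^ (s - 1) := by
  have hF0 : F 0 = 0 := by
    have := hodd 0
    rw [neg_zero] at this
    exact self_eq_neg.mp this
  set G : ℝ → ℂ := fun t => F (Real.sqrt t) with hG
  have hconv : MellinConvergent G s := core_conv F hcont C δ hδ hb s hs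
  set h : ℤ → ℝ → ℂ := fun n t => F ((n : ℝ) * Real.sqrt t) * ec ((p : ℂ) * (n : ℂ)) *
    (t : ℂ) ^ (s - 1) with hh
  have e1 : ∀ t : ℝ, (∑' n : {n : ℤ // n ≠ 0},
        F (((n : ℤ) : ℝ) * Real.sqrt t) * ec ((p : ℂ) * ((n : ℤ) : ℂ))) * (t : ℂ) ^ (s - 1)
        = ∑' n : ℤ, h n t := by
    intro t
    rw [← tsum_mul_right]
    refine tsum_subtype_eq_of_support_subset (f := fun n => h n t) (s := {n : ℤ | n ≠ 0}) ?_
    intro n hn h0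
    apply hn
    simp [hh, h0, hF0]
  simp_rw [e1]
  have hsq : ∀ (k : ℕ) (t : ℝ), ((k : ℝ) + 1) * Real.sqrt t = Real.sqrt (((k : ℝ) + 1) ^ 2 * t) := by
    intro k t
    rw [Real.sqrt_mul (by positivity), Real.sqrt_sq (by positivity)]
  have hpos : ∀ (k : ℕ), h (k + 1) = fun t : ℝ => ec (p : ℂ) ^ (k + 1) *
      ((t : ℂ) ^ (s - 1) • G (((k : ℝ) + 1) ^ 2 * t)) := by
    intro k
    funext t
    have := ec_pow p (k + 1)
    push_cast at this
    simp only [hh, hG, ← hsq, smul_eq_mul, ← this]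
    push_cast
    ring
  have hneg : ∀ (k : ℕ), h (-(k + 1)) = fun t : ℝ => -ec (-(p : ℂ)) ^ (k + 1) *
      ((t : ℂ) ^ (s - 1) • G (((k : ℝ) + 1) ^ 2 * t)) := by
    intro k
    funext t
    have := ec_pow (-p) (k + 1)
    push_cast at this
    have h3 : (p : ℂ) * (-((k : ℂ) + 1)) = -p * (k + 1) := by ring
    have h4 : (-((k : ℝ) + 1)) * Real.sqrt t = - (((k : ℝ) + 1) * Real.sqrt t) := by ring
    simp only [hh, hG, ← hsq, smul_eq_mul, ← this]
    push_cast
    rw [h3, h4, hodd]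
    ring
  have hapos : ∀ k : ℕ, (0 : ℝ) < ((k : ℝ) + 1) ^ 2 := fun k => by positivity
  have hc : ∀ k : ℕ, IntegrableOn (fun t : ℝ => (t : ℂ) ^ (s - 1) • G (((k : ℝ) + 1) ^ 2 * t))
      (Ioi 0) := fun k => (MellinConvergent.comp_mul_left (hapos k)).2 hconv
  have hn1 : ∀ k : ℕ, ‖ec (p : ℂ) ^ (k + 1)‖ = 1 := fun k => by rw [norm_pow, ec_norm, one_pow]
  have hn2 : ∀ k : ℕ, ‖-ec (-(p : ℂ)) ^ (k + 1)‖ = 1 := fun k => by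
    have := ec_norm (-p)
    push_cast at this
    rw [norm_neg, norm_pow, this, one_pow]
  have hint : ∀ n : ℤ, IntegrableOn (h n) (Ioi 0) := by
    intro n
    rcases lt_trichotomy n 0 with hn | hn | hn
    · obtain ⟨k, rfl⟩ : ∃ k : ℕ, n = -(k + 1) := ⟨(-n - 1).toNat, by omega⟩
      rw [hneg]
      exact (hc k).const_mul _
    · have : h n = fun _ => 0 := by funext t; simp [hh, hn, hF0]
      rw [this]; exact integrableOn_zero
    · obtain ⟨k, rfl⟩ : ∃ k : ℕ, n = k + 1 := ⟨(n - 1).toNat, by omega⟩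
      rw [hpos]
      exact (hc k).const_mul _
  have hsumB : Summable fun k : ℕ => (((k : ℝ) + 1) ^ 2) ^ (-s.re) *
      ∫ t in Ioi (0 : ℝ), ‖(t : ℂ) ^ (s - 1) • G t‖ := by
    apply Summable.mul_right
    have h5 : Summable fun k : ℕ => ((k : ℝ)) ^ (-(2 * s.re)) :=
      Real.summable_nat_rpow.2 (by linarith)
    have h6 := (summable_nat_add_iff 1).2 h5
    refine h6.congr fun k => ?_
    rw [← Real.rpow_natCast, ← Real.rpow_mul (by positivity)]
    push_cast
    congr 1; ring
  have hsum : Summable fun n : ℤ => ∫ t in Ioi (0 : ℝ), ‖h n t‖ := by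
    apply Summable.of_add_one_of_neg_add_one
    · refine hsumB.congr fun k => ?_
      rw [← core_norm G s _ (hapos k), hpos]
      simp only [norm_mul (ec (p : ℂ) ^ (k + 1)), hn1, one_mul]
    · refine hsumB.congr fun k => ?_
      rw [← core_norm G s _ (hapos k), hneg]
      simp only [norm_mul (-ec (-(p : ℂ)) ^ (k + 1)), hn2, one_mul]
  have key := hasSum_integral_of_summable_integral_norm hint hsum
  have hR : ∫ t in Ioi (0 : ℝ), G t * (t : ℂ) ^ (s - 1) = mellin G s := by
    simp only [mellin, smul_eq_mul, mul_comm]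
  have hapow : ∀ k : ℕ, ((((k : ℝ) + 1) ^ 2 : ℝ) : ℂ) ^ (-s) = (((k : ℂ) + 1) ^ (2 * s))⁻¹ := by
    intro k
    have hk : ((k : ℂ) + 1) ≠ 0 := Nat.cast_add_one_ne_zero k
    rw [Complex.cpow_neg]
    congr 1
    have := Complex.natCast_mul_natCast_cpow (k + 1) (k + 1) s
    push_cast at this ⊢
    rw [sq, this, ← Complex.cpow_add _ _ hk]
    congr 1; ring
  have hI1 : ∀ k : ℕ, ∫ t in Ioi (0 : ℝ), h (k + 1) t =
      ec (p : ℂ) ^ (k + 1) / ((k : ℂ) + 1) ^ (2 * s) * mellin G s := by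
    intro k
    have := mellin_comp_mul_left G s (hapos k)
    rw [hapow] at this
    rw [hpos, integral_const_mul]
    unfold mellin at this
    rw [this, smul_eq_mul, div_eq_mul_inv, mul_assoc]
    rfl
  have hI2 : ∀ k : ℕ, ∫ t in Ioi (0 : ℝ), h (-(k + 1)) t =
      -(ec (-(p : ℂ)) ^ (k + 1) / ((k : ℂ) + 1) ^ (2 * s) * mellin G s) := by
    intro k
    have := mellin_comp_mul_left G s (hapos k)
    rw [hapow] at this
    rw [hneg, integral_const_mul]
    unfold mellin at this
    rw [this, smul_eq_mul, div_eq_mul_inv, mul_assoc, neg_mul]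
    rfl
  rw [← key.tsum_eq, tsum_of_add_one_of_neg_add_one]
  · simp_rw [hI1, hI2]
    rw [tsum_neg, tsum_mul_right, tsum_mul_right, hR]
    have : ∫ t in Ioi (0 : ℝ), h 0 t = 0 := by simp [hh, hF0]
    rw [this]
    unfold Li
    ring
  · exact key.summable.comp_injective (i := fun k : ℕ => (k : ℤ) + 1)
      (fun a b hab => by simpa using hab)
  · exact key.summable.comp_injective (i := fun k : ℕ => -((k : ℤ) + 1))
      (fun a b hab => by simpa using hab)

lemma E_real (y : ℝ) : E (y : ℂ) = ((∫ u in (0 : ℝ)..y, Real.exp (-Real.pi * u ^ 2) : ℝ) : ℂ) := by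
  have h := intervalIntegral.mul_integral_comp_mul_left (a := 0) (b := 1)
    (f := fun u : ℝ => Real.exp (-Real.pi * u ^ 2)) y
  rw [mul_zero, mul_one] at h
  rw [← h, ← intervalIntegral.integral_const_mul, ← intervalIntegral.integral_ofReal]
  unfold E
  congr 1
  funext t
  push_cast
  congr 2
  ring

lemma gauss_cont : Continuous fun u : ℝ => Real.exp (-Real.pi * u ^ 2) := by fun_prop

lemma E_cont : Continuous fun y : ℝ => E (y : ℂ) := by
  simp_rw [E_real]
  exact Complex.continuous_ofReal.comp
    (intervalIntegral.continuous_primitive (fun a b => gauss_cont.intervalIntegrable a b) 0)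

lemma E_odd (z : ℂ) : E (-z) = - E z := by
  unfold E
  rw [← intervalIntegral.integral_neg]
  congr 1
  funext t
  rw [neg_sq]; ring

lemma E_diff (μ a b : ℝ) (hμ : ∀ u ∈ Set.uIoc a b, μ ≤ u ^ 2) :
    ‖E (b : ℂ) - E (a : ℂ)‖ ≤ Real.exp (-Real.pi * μ) * |b - a| := by
  rw [E_real, E_real, ← Complex.ofReal_sub, Complex.norm_real,
    intervalIntegral.integral_interval_sub_left (gauss_cont.intervalIntegrable _ _)
      (gauss_cont.intervalIntegrable _ _)]
  refine intervalIntegral.norm_integral_le_of_norm_le_const fun u hu => ?_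
  rw [Real.norm_eq_abs, abs_of_pos (Real.exp_pos _)]
  apply Real.exp_le_exp.2
  have := hμ u hu
  nlinarith [Real.pi_pos]

lemma uIoc_sq (a b : ℝ) (hab : 0 < a * b) (u : ℝ) (hu : u ∈ Set.uIoc a b) :
    min (a ^ 2) (b ^ 2) ≤ u ^ 2 := by
  rw [Set.mem_uIoc] at hu
  rcases pos_and_pos_or_neg_and_neg_of_mul_pos hab with ⟨h1, h2⟩ | ⟨h1, h2⟩ <;>
  rcases hu with ⟨h3, h4⟩ | ⟨h3, h4⟩
  · exact (min_le_left _ _).trans (by nlinarith)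
  · exact (min_le_right _ _).trans (by nlinarith)
  · exact (min_le_right _ _).trans (by nlinarith)
  · exact (min_le_left _ _).trans (by nlinarith)

lemma F_bound (k₁ k₂ m : ℝ)
    (h : 0 < m ∨ (0 < k₁ * k₂ ∧ 0 < k₁ ^ 2 + m ∧ 0 < k₂ ^ 2 + m)) :
    ∃ C δ : ℝ, 0 < δ ∧ ∀ x : ℝ, 0 ≤ x →
      ‖E ((k₂ * x : ℝ) : ℂ) - E ((k₁ * x : ℝ) : ℂ)‖ * Real.exp (-Real.pi * m * x ^ 2) ≤
        C * x * Real.exp (-δ * x ^ 2) := by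
  obtain ⟨ν, hν, hh⟩ : ∃ ν : ℝ, 0 < ν + m ∧ ∀ x : ℝ, 0 ≤ x →
      ∀ u ∈ Set.uIoc (k₁ * x) (k₂ * x), ν * x ^ 2 ≤ u ^ 2 := by
    rcases h with h | ⟨h1, h2, h3⟩
    · exact ⟨0, by linarith, fun x hx u hu => by nlinarith [sq_nonneg u]⟩
    · refine ⟨min (k₁ ^ 2) (k₂ ^ 2), ?_, fun x hx u hu => ?_⟩
      · rcases min_choice (k₁ ^ 2) (k₂ ^ 2) with h | h <;> rw [h] <;> assumption
      · rcases hx.eq_or_lt with rfl | hx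
        · nlinarith [sq_nonneg u]
        · have := uIoc_sq (k₁ * x) (k₂ * x)
            (by have := mul_pos h1 (mul_pos hx hx); nlinarith) u hu
          rwa [mul_pow, mul_pow, ← min_mul_of_nonneg _ _ (sq_nonneg x)] at this
  refine ⟨|k₂ - k₁|, Real.pi * (ν + m), mul_pos Real.pi_pos hν, fun x hx => ?_⟩
  have h1 := E_diff (ν * x ^ 2) (k₁ * x) (k₂ * x) (hh x hx)
  calc _ ≤ (Real.exp (-Real.pi * (ν * x ^ 2)) * |k₂ * x - k₁ * x|) *
        Real.exp (-Real.pi * m * x ^ 2) := by gcongr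
    _ = |k₂ * x - k₁ * x| * (Real.exp (-Real.pi * (ν * x ^ 2)) *
        Real.exp (-Real.pi * m * x ^ 2)) := by ring
    _ = _ := by
      rw [← Real.exp_add, ← sub_mul, abs_mul, abs_of_nonneg hx]
      congr 2
      ring

/-- The real slope. -/
noncomputable def kap (M : Matrix (Fin 2) (Fin 2) ℝ) (c : Fin 2 → ℝ) : ℝ :=
  (M 0 0 * c 0 + M 1 0 * c 1) / Real.sqrt (-(1 / 2) * (c ⬝ᵥ M.mulVec c))

lemma rho_eq (M : Matrix (Fin 2) (Fin 2) ℝ) (c : Fin 2 → ℝ) (x : ℝ) :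
    rho M c ![(x : ℂ), 0] = E ((kap M c * x : ℝ) : ℂ) := by
  unfold rho kap
  congr 1
  simp only [dotProduct, mulVec, Fin.sum_univ_two, Matrix.map_apply]
  push_cast
  simp
  ring

lemma ec_gauss_norm (m r x : ℝ) :
    ‖ec ((1 / 2) * (Complex.I * m + r) * (x : ℂ) ^ 2)‖ = Real.exp (-Real.pi * m * x ^ 2) := by
  unfold ec
  rw [Complex.norm_exp]
  congr 1
  have : 2 * (Real.pi : ℂ) * Complex.I * ((1 / 2) * (Complex.I * m + r) * (x : ℂ) ^ 2)
      = ((-Real.pi * m * x ^ 2 : ℝ) : ℂ) + ((Real.pi * r * x ^ 2 : ℝ) : ℂ) * Complex.I := by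
    push_cast
    linear_combination (Real.pi * m * x ^ 2 : ℂ) * Complex.I_mul_I
  rw [this]
  simp [-Complex.ofReal_mul, -Complex.ofReal_neg, -Complex.ofReal_pow]

lemma cone_fact (M : Matrix (Fin 2) (Fin 2) ℝ) (hM : M.IsSymm) (hdet : M.det < 0)
    (hm : M 0 0 ≤ 0) (c : Fin 2 → ℝ) (hc : c ⬝ᵥ M.mulVec c < 0) :
    M 0 0 * c 0 + M 1 0 * c 1 ≠ 0 ∧ 0 < kap M c ^ 2 + M 0 0 := by
  have hs : M 0 1 = M 1 0 := hM.apply 1 0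
  have hQ : c ⬝ᵥ M.mulVec c = M 0 0 * c 0 ^ 2 + 2 * M 1 0 * c 0 * c 1 + M 1 1 * c 1 ^ 2 := by
    simp only [dotProduct, mulVec, Fin.sum_univ_two, hs]
    ring
  have hD : M.det = M 0 0 * M 1 1 - M 1 0 ^ 2 := by rw [Matrix.det_fin_two, hs]; ring
  set Q := c ⬝ᵥ M.mulVec c with hQd
  set L := M 0 0 * c 0 + M 1 0 * c 1 with hL
  have hid : L ^ 2 = M 0 0 * Q + (-M.det) * c 1 ^ 2 := by rw [hQ, hD, hL]; ring
  have h1 : 0 ≤ M 0 0 * Q := mul_nonneg_of_nonpos_of_nonpos hm hc.le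
  have h2 : 0 ≤ (-M.det) * c 1 ^ 2 := mul_nonneg (by linarith) (sq_nonneg _)
  have hL0 : L ≠ 0 := by
    intro h0
    rw [h0] at hid
    have h3 : M 0 0 * Q = 0 := by nlinarith
    have h4 : (-M.det) * c 1 ^ 2 = 0 := by nlinarith
    have h5 : M 0 0 = 0 := by
      rcases mul_eq_zero.1 h3 with h | h
      · exact h
      · exact absurd h hc.ne
    have h6 : c 1 = 0 := by
      rcases mul_eq_zero.1 h4 with h | h
      · linarith
      · exact pow_eq_zero_iff (two_ne_zero) |>.1 h
    rw [h5, h6] at hQ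
    simp at hQ
    exact hc.ne hQ
  refine ⟨hL0, ?_⟩
  unfold kap
  rw [← hQd, ← hL, div_pow, Real.sq_sqrt (by linarith)]
  have h7 : 0 < L ^ 2 := by positivity
  have h8 : 0 < -(1 / 2) * Q := by linarith
  have : L ^ 2 / (-(1 / 2) * Q) + M 0 0 = (L ^ 2 + M 0 0 * (-(1 / 2) * Q)) / (-(1 / 2) * Q) := by
    rw [add_div, mul_div_cancel_right₀ _ h8.ne']
  rw [this]
  apply div_pos _ h8
  nlinarith

lemma kap_mul (M : Matrix (Fin 2) (Fin 2) ℝ) (hM : M.IsSymm) (hdet : M.det < 0)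
    (hm : M 0 0 ≤ 0) (c₁ c₂ : Fin 2 → ℝ) (hc₁ : c₁ ⬝ᵥ M.mulVec c₁ < 0)
    (hc₂ : c₂ ⬝ᵥ M.mulVec c₂ < 0)
    (hconn : c₂ ∈ connectedComponentIn {x : Fin 2 → ℝ | x ⬝ᵥ M.mulVec x < 0} c₁) :
    0 < kap M c₁ * kap M c₂ := by
  set S := {x : Fin 2 → ℝ | x ⬝ᵥ M.mulVec x < 0} with hS
  let L : (Fin 2 → ℝ) → ℝ := fun c => M 0 0 * c 0 + M 1 0 * c 1
  have hLc : Continuous L := by fun_prop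
  have hpre : IsPreconnected (L '' connectedComponentIn S c₁) :=
    isPreconnected_connectedComponentIn.image L hLc.continuousOn
  have hord := hpre.ordConnected
  have m1 : L c₁ ∈ L '' connectedComponentIn S c₁ :=
    ⟨c₁, mem_connectedComponentIn hc₁, rfl⟩
  have m2 : L c₂ ∈ L '' connectedComponentIn S c₁ := ⟨c₂, hconn, rfl⟩
  have hL : 0 < L c₁ * L c₂ := by
    by_contra hcon
    have h0 : (0 : ℝ) ∈ Set.uIcc (L c₁) (L c₂) := by
      rw [Set.mem_uIcc]
      rcases mul_nonpos_iff.1 (not_lt.1 hcon) with h | h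
      · exact Or.inr ⟨h.2, h.1⟩
      · exact Or.inl h
    obtain ⟨c, hc, hc0⟩ := hord.uIcc_subset m1 m2 h0
    have hcS : c ∈ S := connectedComponentIn_subset _ _ hc
    exact (cone_fact M hM hdet hm c hcS).1 hc0
  have s1 : 0 < Real.sqrt (-(1 / 2) * (c₁ ⬝ᵥ M.mulVec c₁)) := Real.sqrt_pos.2 (by linarith)
  have s2 : 0 < Real.sqrt (-(1 / 2) * (c₂ ⬝ᵥ M.mulVec c₂)) := Real.sqrt_pos.2 (by linarith)
  unfold kap
  rw [div_mul_div_comm]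
  exact div_pos hL (mul_pos s1 s2)

lemma ec_add (a b : ℂ) : ec (a + b) = ec a * ec b := by
  unfold ec
  rw [mul_add, Complex.exp_add]

end Helpers

/-- **Mellin transform of the `n₂ = 0` part of the indefinite theta function.**
With `M` of signature `(1,1)`, `Ω = iM + N`, `c₁, c₂` in the same connected component of
the negative cone of `M`, `p₁ ∈ ℝ` and `Re s > 1/2`:
`∫₀^∞ (Σ_{n≠0} ρ_M^{c₁,c₂}((n√t, 0)ᵀ)·e(½ω₁₁n²t + p₁n))·t^{s-1} dt
  = (Li_{2s}(e(p₁)) - Li_{2s}(e(-p₁)))·∫₀^∞ ρ_M^{c₁,c₂}((√t, 0)ᵀ)·e(½ω₁₁t)·t^{s-1} dt`. -/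
theorem stmt_9 (M N : Matrix (Fin 2) (Fin 2) ℝ) (hMsymm : M.IsSymm) (hNsymm : N.IsSymm)
    (hdet : M.det < 0)
    (Ω : Matrix (Fin 2) (Fin 2) ℂ)
    (hΩ : Ω = Complex.I • M.map Complex.ofReal + N.map Complex.ofReal)
    (c₁ c₂ : Fin 2 → ℝ) (hc₁ : c₁ ⬝ᵥ M.mulVec c₁ < 0) (hc₂ : c₂ ⬝ᵥ M.mulVec c₂ < 0)
    (hconn : c₂ ∈ connectedComponentIn {x : Fin 2 → ℝ | x ⬝ᵥ M.mulVec x < 0} c₁)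
    (p₁ : ℝ) (s : ℂ) (hs : 1 / 2 < s.re) :
    ∫ t in Set.Ioi (0 : ℝ),
        (∑' n : {n : ℤ // n ≠ 0},
            (rho M c₂ ![((n : ℤ) : ℂ) * (Real.sqrt t : ℂ), 0] -
                rho M c₁ ![((n : ℤ) : ℂ) * (Real.sqrt t : ℂ), 0]) *
              ec ((1 / 2) * Ω 0 0 * ((n : ℤ) : ℂ) ^ 2 * (t : ℂ) + (p₁ : ℂ) * ((n : ℤ) : ℂ))) *
          (t : ℂ) ^ (s - 1)
      = (Li (2 * s) (ec (p₁ : ℂ)) - Li (2 * s) (ec (-(p₁ : ℂ)))) *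
          ∫ t in Set.Ioi (0 : ℝ),
            (rho M c₂ ![(Real.sqrt t : ℂ), 0] - rho M c₁ ![(Real.sqrt t : ℂ), 0]) *
              ec ((1 / 2) * Ω 0 0 * (t : ℂ)) * (t : ℂ) ^ (s - 1) := by
  have hdata : 0 < M 0 0 ∨ (0 < kap M c₁ * kap M c₂ ∧ 0 < kap M c₁ ^ 2 + M 0 0 ∧
      0 < kap M c₂ ^ 2 + M 0 0) := by
    rcases lt_or_ge 0 (M 0 0) with hm | hm
    · exact Or.inl hm
    · exact Or.inr ⟨kap_mul M hMsymm hdet hm c₁ c₂ hc₁ hc₂ hconn,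
        (cone_fact M hMsymm hdet hm c₁ hc₁).2, (cone_fact M hMsymm hdet hm c₂ hc₂).2⟩
  obtain ⟨C, δ, hδ, hb⟩ := F_bound _ _ _ hdata
  have hω : Ω 0 0 = Complex.I * (M 0 0 : ℝ) + (N 0 0 : ℝ) := by
    rw [hΩ]; simp
  let F : ℝ → ℂ := fun x => (E ((kap M c₂ * x : ℝ) : ℂ) - E ((kap M c₁ * x : ℝ) : ℂ)) *
    ec ((1 / 2) * Ω 0 0 * (x : ℂ) ^ 2)
  have hcont : Continuous F := by
    have h1 : Continuous fun x : ℝ => E ((kap M c₂ * x : ℝ) : ℂ) :=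
      E_cont.comp (continuous_const.mul continuous_id)
    have h2 : Continuous fun x : ℝ => E ((kap M c₁ * x : ℝ) : ℂ) :=
      E_cont.comp (continuous_const.mul continuous_id)
    refine (h1.sub h2).mul ?_
    unfold ec
    fun_prop
  have hodd : ∀ x, F (-x) = -F x := by
    intro x
    simp only [F, mul_neg, Complex.ofReal_neg, E_odd, neg_sq]
    ring
  have hbF : ∀ x : ℝ, 0 ≤ x → ‖F x‖ ≤ C * x * Real.exp (-δ * x ^ 2) := by
    intro x hx
    simp only [F]
    rw [norm_mul, hω, ec_gauss_norm]
    exact hb x hx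
  have key := core F hodd hcont C δ hδ hbF p₁ s hs
  have hsq : ∀ t : ℝ, t ∈ Set.Ioi (0 : ℝ) → ((Real.sqrt t : ℝ) : ℂ) ^ 2 = (t : ℂ) := by
    intro t ht
    rw [← Complex.ofReal_pow, Real.sq_sqrt (le_of_lt ht)]
  have eL : ∀ t ∈ Set.Ioi (0 : ℝ), (∑' n : {n : ℤ // n ≠ 0},
            (rho M c₂ ![((n : ℤ) : ℂ) * (Real.sqrt t : ℂ), 0] -
                rho M c₁ ![((n : ℤ) : ℂ) * (Real.sqrt t : ℂ), 0]) *
              ec ((1 / 2) * Ω 0 0 * ((n : ℤ) : ℂ) ^ 2 * (t : ℂ) + (p₁ : ℂ) * ((n : ℤ) : ℂ))) *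
          (t : ℂ) ^ (s - 1) = (∑' n : {n : ℤ // n ≠ 0},
        F (((n : ℤ) : ℝ) * Real.sqrt t) * ec ((p₁ : ℂ) * ((n : ℤ) : ℂ))) * (t : ℂ) ^ (s - 1) := by
    intro t ht
    congr 1
    refine tsum_congr fun n => ?_
    have h1 : ((n : ℤ) : ℂ) * (Real.sqrt t : ℂ) = ((((n : ℤ) : ℝ) * Real.sqrt t : ℝ) : ℂ) := by
      push_cast; rfl
    rw [h1, rho_eq, rho_eq, ec_add, ← mul_assoc]
    simp only [F]
    rw [← h1, mul_pow, hsq t ht, ← mul_assoc (1 / 2 * Ω 0 0)]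
  have eR : ∀ t ∈ Set.Ioi (0 : ℝ),
      (rho M c₂ ![(Real.sqrt t : ℂ), 0] - rho M c₁ ![(Real.sqrt t : ℂ), 0]) *
              ec ((1 / 2) * Ω 0 0 * (t : ℂ)) * (t : ℂ) ^ (s - 1) =
        F (Real.sqrt t) * (t : ℂ) ^ (s - 1) := by
    intro t ht
    simp only [F]
    rw [rho_eq, rho_eq, hsq t ht]
  rw [MeasureTheory.setIntegral_congr_fun measurableSet_Ioi eL,
    MeasureTheory.setIntegral_congr_fun measurableSet_Ioi eR]
  exact key
end

section
/- Let p₁ ∈ (0,1) and p₂ ∈ ℝ. For ξ in the upper half-plane ℍ = {ξ ∈ ℂ : Im ξ > 0} define φ_{p₁,p₂}(ξ) := (1 - e(p₁ξ + p₂)) · Π_{d=1}^∞ (1 - e((d+p₁)ξ + p₂)) / (1 - e((d-p₁)ξ - p₂)). Then: (i) for every ξ ∈ ℍ each factor is nonzero, the infinite product converges, and φ_{p₁,p₂}(ξ) ≠ 0; and (ii) there exists a unique continuous function L : ℍ → ℂ such that exp(L(ξ)) = φ_{p₁,p₂}(ξ) for all ξ ∈ ℍ and L(iy) → 0 as y →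 +∞. -/
/-- `φ_{p₁,p₂}(ξ) := (1 - e(p₁ξ + p₂))·Π_{d=1}^∞ (1 - e((d+p₁)ξ + p₂))/(1 - e((d-p₁)ξ - p₂))`. -/
noncomputable def phi (p₁ p₂ : ℝ) (ξ : ℂ) : ℂ :=
  (1 - ec ((p₁ : ℂ) * ξ + (p₂ : ℂ))) *
    ∏' d : ℕ, (1 - ec (((d : ℂ) + 1 + (p₁ : ℂ)) * ξ + (p₂ : ℂ))) /
      (1 - ec (((d : ℂ) + 1 - (p₁ : ℂ)) * ξ - (p₂ : ℂ)))

theorem ec_norm_s10 (a b : ℝ) (ξ : ℂ) :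
    ‖ec ((a : ℂ) * ξ + (b : ℂ))‖ = Real.exp (-(2 * Real.pi * (a * ξ.im))) := by
  unfold ec
  rw [Complex.norm_exp]
  congr 1
  simp

theorem ec_norm_lt (a b : ℝ) (ha : 0 < a) (ξ : ℂ) (h : 0 < ξ.im) :
    ‖ec ((a : ℂ) * ξ + (b : ℂ))‖ < 1 := by
  rw [ec_norm_s10, Real.exp_lt_one_iff]
  have := mul_pos Real.pi_pos (mul_pos ha h)
  linarith

theorem one_sub_ec_slit (a b : ℝ) (ha : 0 < a) (ξ : ℂ) (h : 0 < ξ.im) :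
    1 - ec ((a : ℂ) * ξ + (b : ℂ)) ∈ Complex.slitPlane := by
  rw [sub_eq_add_neg]
  apply Complex.mem_slitPlane_of_norm_lt_one
  rw [norm_neg]
  exact ec_norm_lt a b ha ξ h

/-- Principal log of a factor. -/
noncomputable def glog (a b : ℝ) (ξ : ℂ) : ℂ := Complex.log (1 - ec ((a : ℂ) * ξ + (b : ℂ)))

theorem glog_exp (a b : ℝ) (ha : 0 < a) (ξ : ℂ) (h : 0 < ξ.im) :
    Complex.exp (glog a b ξ) = 1 - ec ((a : ℂ) * ξ + (b : ℂ)) :=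
  Complex.exp_log (Complex.slitPlane_ne_zero (one_sub_ec_slit a b ha ξ h))

theorem glog_cont (a b : ℝ) (ha : 0 < a) : ContinuousOn (glog a b) {ξ : ℂ | 0 < ξ.im} := by
  unfold glog
  apply ContinuousOn.clog
  · unfold ec
    fun_prop
  · intro ξ h
    exact one_sub_ec_slit a b ha ξ h

theorem glog_bound (c δ : ℝ) (hc : 0 < c) (hδ : 0 < δ) (d : ℕ) (a b : ℝ) (ha : d + c ≤ a)
    (ξ : ℂ) (h : δ ≤ ξ.im) :
    ‖glog a b ξ‖ ≤ ((1 - Real.exp (-(2 * Real.pi * (c * δ))))⁻¹ / 2 + 1) *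
      Real.exp (-(2 * Real.pi * δ)) ^ d := by
  have hd : (0 : ℝ) ≤ d := Nat.cast_nonneg d
  have ha0 : 0 < a := by linarith
  have hn := ec_norm_s10 a b ξ
  have hlt := ec_norm_lt a b ha0 ξ (by linarith)
  unfold glog
  set z := ec ((a : ℂ) * ξ + (b : ℂ))
  have hpi := Real.pi_pos
  have h1 : ‖z‖ ≤ Real.exp (-(2 * Real.pi * (c * δ))) := by
    rw [hn]
    apply Real.exp_le_exp.2
    have : c * δ ≤ a * ξ.im := mul_le_mul (by linarith) h hδ.le ha0.le
    have := mul_le_mul_of_nonneg_left this hpi.le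
    linarith
  have h2 : ‖z‖ ≤ Real.exp (-(2 * Real.pi * δ)) ^ d := by
    rw [hn, ← Real.exp_nat_mul]
    apply Real.exp_le_exp.2
    have : d * δ ≤ a * ξ.im := mul_le_mul (by linarith) h hδ.le ha0.le
    have := mul_le_mul_of_nonneg_left this hpi.le
    linarith
  have h3 : Real.exp (-(2 * Real.pi * (c * δ))) < 1 := by
    rw [Real.exp_lt_one_iff]
    have := mul_pos hpi (mul_pos hc hδ)
    linarith
  have h4 := Complex.norm_log_one_add_le (z := -z) (by rwa [norm_neg])
  rw [norm_neg, ← sub_eq_add_neg] at h4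
  have h5 : (1 - ‖z‖)⁻¹ ≤ (1 - Real.exp (-(2 * Real.pi * (c * δ))))⁻¹ :=
    inv_anti₀ (by linarith) (by linarith)
  set K := (1 - Real.exp (-(2 * Real.pi * (c * δ))))⁻¹
  have hK : 0 ≤ K := inv_nonneg.2 (by linarith)
  have h0 := norm_nonneg z
  calc _ ≤ _ := h4
    _ ≤ ‖z‖ * K / 2 + ‖z‖ := by
      have : ‖z‖ ^ 2 * (1 - ‖z‖)⁻¹ ≤ ‖z‖ * K := by
        apply mul_le_mul _ h5 (inv_nonneg.2 (by linarith)) h0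
        nlinarith
      linarith
    _ = (K / 2 + 1) * ‖z‖ := by ring
    _ ≤ _ := by gcongr

open Filter Topology in
theorem glog_lim (a b : ℝ) (ha : 0 < a) :
    Tendsto (fun y : ℝ => glog a b (Complex.I * (y : ℂ))) atTop (𝓝 0) := by
  have h : Tendsto (fun y : ℝ => ec ((a : ℂ) * (Complex.I * (y : ℂ)) + (b : ℂ))) atTop (𝓝 0) := by
    rw [tendsto_zero_iff_norm_tendsto_zero]
    simp_rw [ec_norm_s10]
    apply Real.tendsto_exp_neg_atTop_nhds_zero.comp
    simp only [Complex.mul_im, Complex.I_re, Complex.I_im, Complex.ofReal_re, Complex.ofReal_im,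
      zero_mul, zero_add, one_mul]
    exact (tendsto_id.const_mul_atTop ha).const_mul_atTop (by positivity)
  have h2 := (h.const_sub 1).clog (by simp)
  simpa [glog] using h2

/-- The `d`-th log term. -/
noncomputable def tlog (p₁ p₂ : ℝ) (d : ℕ) (ξ : ℂ) : ℂ :=
  glog (d + 1 + p₁) p₂ ξ - glog (d + 1 - p₁) (-p₂) ξ

theorem tlog_bound (p₁ p₂ : ℝ) (h0 : 0 < p₁) (h1 : p₁ < 1) (δ : ℝ) (hδ : 0 < δ) :
    ∃ u : ℕ → ℝ, Summable u ∧ ∀ d : ℕ, ∀ ξ : ℂ, δ ≤ ξ.im → ‖tlog p₁ p₂ d ξ‖ ≤ u d := by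
  refine ⟨fun d => 2 * (((1 - Real.exp (-(2 * Real.pi * ((1 - p₁) * δ))))⁻¹ / 2 + 1) *
      Real.exp (-(2 * Real.pi * δ)) ^ d), ?_, ?_⟩
  · apply Summable.mul_left
    apply Summable.mul_left
    apply summable_geometric_of_lt_one (Real.exp_pos _).le
    rw [Real.exp_lt_one_iff]
    have := mul_pos Real.pi_pos hδ
    linarith
  · intro d ξ h
    have e1 := glog_bound (1 - p₁) δ (by linarith) hδ d (d + 1 + p₁) p₂ (by linarith) ξ h
    have e2 := glog_bound (1 - p₁) δ (by linarith) hδ d (d + 1 - p₁) (-p₂) (by linarith) ξ h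
    have := norm_sub_le (glog (d + 1 + p₁) p₂ ξ) (glog (d + 1 - p₁) (-p₂) ξ)
    unfold tlog
    linarith

theorem pos_ap (p₁ : ℝ) (h0 : 0 < p₁) (d : ℕ) : 0 < (d : ℝ) + 1 + p₁ := by positivity

theorem pos_am (p₁ : ℝ) (h1 : p₁ < 1) (d : ℕ) : 0 < (d : ℝ) + 1 - p₁ := by
  have : (0 : ℝ) ≤ d := Nat.cast_nonneg d
  linarith

theorem tlog_cont (p₁ p₂ : ℝ) (h0 : 0 < p₁) (h1 : p₁ < 1) (d : ℕ) :
    ContinuousOn (tlog p₁ p₂ d) {ξ : ℂ | 0 < ξ.im} :=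
  (glog_cont _ _ (pos_ap p₁ h0 d)).sub (glog_cont _ _ (pos_am p₁ h1 d))

theorem tlog_exp (p₁ p₂ : ℝ) (h0 : 0 < p₁) (h1 : p₁ < 1) (d : ℕ) (ξ : ℂ) (h : 0 < ξ.im) :
    Complex.exp (tlog p₁ p₂ d ξ) = (1 - ec (((d : ℂ) + 1 + (p₁ : ℂ)) * ξ + (p₂ : ℂ))) /
        (1 - ec (((d : ℂ) + 1 - (p₁ : ℂ)) * ξ - (p₂ : ℂ))) := by
  unfold tlog
  rw [Complex.exp_sub, glog_exp _ _ (pos_ap p₁ h0 d) ξ h, glog_exp _ _ (pos_am p₁ h1 d) ξ h]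
  push_cast
  simp only [sub_eq_add_neg]

theorem tlog_prod (p₁ p₂ : ℝ) (h0 : 0 < p₁) (h1 : p₁ < 1) (ξ : ℂ) (h : 0 < ξ.im) :
    HasProd (fun d : ℕ => (1 - ec (((d : ℂ) + 1 + (p₁ : ℂ)) * ξ + (p₂ : ℂ))) /
        (1 - ec (((d : ℂ) + 1 - (p₁ : ℂ)) * ξ - (p₂ : ℂ))))
      (Complex.exp (∑' d, tlog p₁ p₂ d ξ)) := by
  obtain ⟨u, hu, hb⟩ := tlog_bound p₁ p₂ h0 h1 ξ.im h
  have hs : Summable fun d => tlog p₁ p₂ d ξ := Summable.of_norm_bounded hu fun d => hb d ξ le_rfl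
  have := hs.hasSum.cexp
  convert this using 1
  funext d
  exact (tlog_exp p₁ p₂ h0 h1 d ξ h).symm

/-- The distinguished logarithm. -/
noncomputable def Lphi (p₁ p₂ : ℝ) (ξ : ℂ) : ℂ := glog p₁ p₂ ξ + ∑' d, tlog p₁ p₂ d ξ

theorem Lphi_exp (p₁ p₂ : ℝ) (h0 : 0 < p₁) (h1 : p₁ < 1) (ξ : ℂ) (h : 0 < ξ.im) :
    Complex.exp (Lphi p₁ p₂ ξ) = phi p₁ p₂ ξ := by
  unfold Lphi phi
  rw [Complex.exp_add, glog_exp _ _ h0 ξ h, (tlog_prod p₁ p₂ h0 h1 ξ h).tprod_eq]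

theorem Lphi_cont (p₁ p₂ : ℝ) (h0 : 0 < p₁) (h1 : p₁ < 1) :
    ContinuousOn (Lphi p₁ p₂) {ξ : ℂ | 0 < ξ.im} := by
  apply (glog_cont _ _ h0).add
  intro ξ h
  have h : 0 < ξ.im := h
  obtain ⟨u, hu, hb⟩ := tlog_bound p₁ p₂ h0 h1 (ξ.im / 2) (by linarith)
  have hc : ContinuousOn (fun ξ => ∑' d, tlog p₁ p₂ d ξ) {z : ℂ | ξ.im / 2 < z.im} := by
    refine continuousOn_tsum (fun d => (tlog_cont p₁ p₂ h0 h1 d).mono ?_) hu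
      fun d z hz => hb d z (le_of_lt hz)
    intro z hz
    have hz : ξ.im / 2 < z.im := hz
    show 0 < z.im
    linarith
  refine (hc.continuousAt (IsOpen.mem_nhds ?_ ?_)).continuousWithinAt
  · exact isOpen_lt continuous_const Complex.continuous_im
  · show ξ.im / 2 < ξ.im
    linarith

open Filter Topology in
theorem Lphi_lim (p₁ p₂ : ℝ) (h0 : 0 < p₁) (h1 : p₁ < 1) :
    Tendsto (fun y : ℝ => Lphi p₁ p₂ (Complex.I * (y : ℂ))) atTop (𝓝 0) := by
  obtain ⟨u, hu, hb⟩ := tlog_bound p₁ p₂ h0 h1 1 one_pos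
  have : Tendsto (fun y : ℝ => ∑' d, tlog p₁ p₂ d (Complex.I * (y : ℂ))) atTop
      (𝓝 (∑' _ : ℕ, (0 : ℂ))) := by
    refine tendsto_tsum_of_dominated_convergence hu (fun d => ?_) ?_
    · simpa [tlog] using (glog_lim _ p₂ (pos_ap p₁ h0 d)).sub (glog_lim _ (-p₂) (pos_am p₁ h1 d))
    · filter_upwards [eventually_ge_atTop 1] with y hy d
      exact hb d _ (by simpa using hy)
  simpa [Lphi] using (glog_lim p₁ p₂ h0).add this

open Filter Topology in
theorem log_unique (L L' : ℂ → ℂ) (hc : ContinuousOn L {ξ : ℂ | 0 < ξ.im})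
    (hc' : ContinuousOn L' {ξ : ℂ | 0 < ξ.im})
    (he : ∀ ξ : ℂ, 0 < ξ.im → Complex.exp (L ξ) = Complex.exp (L' ξ))
    (hl : Tendsto (fun y : ℝ => L (Complex.I * (y : ℂ))) atTop (𝓝 0))
    (hl' : Tendsto (fun y : ℝ => L' (Complex.I * (y : ℂ))) atTop (𝓝 0)) :
    Set.EqOn L L' {ξ : ℂ | 0 < ξ.im} := by
  have hpre : IsPreconnected {ξ : ℂ | 0 < ξ.im} := (convex_halfSpace_im_gt 0).isPreconnected
  obtain ⟨w, -, hw⟩ := hpre.eqOn_const_of_mapsTo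
    (Complex.isClosedEmbedding_intCast.isInducing.isDiscrete_range)
    (f := fun ξ => (L ξ - L' ξ) / (2 * Real.pi * Complex.I))
    ((hc.sub hc').div_const _) (by
      intro ξ h
      have : Complex.exp (L ξ - L' ξ) = 1 := by
        rw [Complex.exp_sub, he ξ h, div_self (Complex.exp_ne_zero _)]
      obtain ⟨n, hn⟩ := Complex.exp_eq_one_iff.1 this
      refine ⟨n, ?_⟩
      simp only [hn]
      rw [mul_div_cancel_right₀ _ Complex.two_pi_I_ne_zero]) (Set.range_nonempty _)
  have ht := (hl.sub hl').div_const (2 * Real.pi * Complex.I)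
  have ht2 : Tendsto (fun _ : ℝ => w) atTop (𝓝 ((0 - 0) / (2 * Real.pi * Complex.I))) := by
    refine ht.congr' ?_
    filter_upwards [eventually_gt_atTop 0] with y hy
    exact hw (show 0 < (Complex.I * (y : ℂ)).im by simpa using hy)
  have hw0 : w = 0 := by simpa using tendsto_nhds_unique tendsto_const_nhds ht2
  intro ξ h
  have := hw h
  simp only [hw0, Function.const_apply] at this
  rcases div_eq_zero_iff.1 this with h | h
  · exact sub_eq_zero.1 h
  · exact absurd h Complex.two_pi_I_ne_zero

/-- **The distinguished continuous logarithm of `φ_{p₁,p₂}`.**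
For `p₁ ∈ (0,1)` and `p₂ ∈ ℝ`: (i) on the upper half-plane each factor of the product
defining `φ_{p₁,p₂}` is nonzero, the infinite product converges, and `φ_{p₁,p₂}(ξ) ≠ 0`;
(ii) there is a continuous `L` on the upper half-plane with `exp(L(ξ)) = φ_{p₁,p₂}(ξ)`
and `L(iy) → 0` as `y → +∞`, unique as a function on the upper half-plane. -/
theorem stmt_10 (p₁ p₂ : ℝ) (h0 : 0 < p₁) (h1 : p₁ < 1) :
    (∀ ξ : ℂ, 0 < ξ.im →
      (1 - ec ((p₁ : ℂ) * ξ + (p₂ : ℂ)) ≠ 0) ∧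
      (∀ d : ℕ, (1 - ec (((d : ℂ) + 1 + (p₁ : ℂ)) * ξ + (p₂ : ℂ))) ≠ 0 ∧
        (1 - ec (((d : ℂ) + 1 - (p₁ : ℂ)) * ξ - (p₂ : ℂ))) ≠ 0) ∧
      Multipliable (fun d : ℕ => (1 - ec (((d : ℂ) + 1 + (p₁ : ℂ)) * ξ + (p₂ : ℂ))) /
        (1 - ec (((d : ℂ) + 1 - (p₁ : ℂ)) * ξ - (p₂ : ℂ)))) ∧
      phi p₁ p₂ ξ ≠ 0) ∧
    (∃ L : ℂ → ℂ,
      (ContinuousOn L {ξ : ℂ | 0 < ξ.im} ∧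
        (∀ ξ : ℂ, 0 < ξ.im → Complex.exp (L ξ) = phi p₁ p₂ ξ) ∧
        Filter.Tendsto (fun y : ℝ => L (Complex.I * (y : ℂ))) Filter.atTop (nhds 0)) ∧
      ∀ L' : ℂ → ℂ,
        (ContinuousOn L' {ξ : ℂ | 0 < ξ.im} ∧
          (∀ ξ : ℂ, 0 < ξ.im → Complex.exp (L' ξ) = phi p₁ p₂ ξ) ∧
          Filter.Tendsto (fun y : ℝ => L' (Complex.I * (y : ℂ))) Filter.atTop (nhds 0)) →
        Set.EqOn L L' {ξ : ℂ | 0 < ξ.im}) := by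
  refine ⟨fun ξ h => ⟨?_, fun d => ⟨?_, ?_⟩, (tlog_prod p₁ p₂ h0 h1 ξ h).multipliable, ?_⟩,
    Lphi p₁ p₂, ⟨Lphi_cont p₁ p₂ h0 h1, Lphi_exp p₁ p₂ h0 h1, Lphi_lim p₁ p₂ h0 h1⟩, ?_⟩
  · exact Complex.slitPlane_ne_zero (one_sub_ec_slit p₁ p₂ h0 ξ h)
  · have := Complex.slitPlane_ne_zero (one_sub_ec_slit _ p₂ (pos_ap p₁ h0 d) ξ h)
    push_cast at this
    exact this
  · have := Complex.slitPlane_ne_zero (one_sub_ec_slit _ (-p₂) (pos_am p₁ h1 d) ξ h)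
    push_cast at this
    rw [← sub_eq_add_neg] at this
    exact this
  · rw [← Lphi_exp p₁ p₂ h0 h1 ξ h]
    exact Complex.exp_ne_zero _
  · rintro L' ⟨hc, he, hl⟩
    exact log_unique _ _ (Lphi_cont p₁ p₂ h0 h1) hc
      (fun ξ h => by rw [Lphi_exp p₁ p₂ h0 h1 ξ h, he ξ h]) (Lphi_lim p₁ p₂ h0 h1) hl
end

section
/- Let M be a real symmetric 2×2 matrix with det M < 0 (signature (1,1)) and let c ∈ ℝ² with cᵀMc < 0. Then the real symmetric 2×2 matrix M - (2/(cᵀMc))·(Mc)(Mc)ᵀ is positive definite. -/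
open Matrix

/-- **Positive definiteness of `Im Λ_Ω^c`.**
Let `M` be a real symmetric 2×2 matrix with `det M < 0` (signature `(1,1)`) and `c ∈ ℝ²`
with `cᵀMc < 0`.  Then `M - (2/(cᵀMc))·(Mc)(Mc)ᵀ` is positive definite. -/
theorem stmt_11 (M : Matrix (Fin 2) (Fin 2) ℝ) (hM : M.IsSymm) (hdet : M.det < 0)
    (c : Fin 2 → ℝ) (hc : c ⬝ᵥ M.mulVec c < 0) :
    (M - (2 / (c ⬝ᵥ M.mulVec c)) • Matrix.vecMulVec (M.mulVec c) (M.mulVec c)).PosDef := by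
  have hs : M 1 0 = M 0 1 := hM.apply 0 1
  apply Matrix.PosDef.of_dotProduct_mulVec_pos
  · ext i j
    have h := hM.apply i j
    simp only [conjTranspose_apply, Matrix.sub_apply, Matrix.smul_apply, vecMulVec_apply,
      star_trivial, smul_eq_mul, h]
    ring
  · intro x hx
    obtain ⟨q, hq⟩ : ∃ q, q = c ⬝ᵥ M.mulVec c := ⟨_, rfl⟩
    rw [← hq] at hc ⊢
    have hq0 : q ≠ 0 := hc.ne
    rw [det_fin_two, hs] at hdet
    simp only [dotProduct, mulVec, Fin.sum_univ_two, hs] at hq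
    set v0 := M 0 0 * c 0 + M 0 1 * c 1 with hv0
    set v1 := M 0 1 * c 0 + M 1 1 * c 1 with hv1
    set b := x 0 * v0 + x 1 * v1 with hb
    set w := x 0 * c 1 - x 1 * c 0 with hw
    have key : (M 0 0 * M 1 1 - M 0 1 * M 0 1) * w ^ 2 - b ^ 2 < 0 := by
      by_contra! hcon
      have h1 : 0 ≤ w ^ 2 := sq_nonneg w
      have h2 : 0 ≤ b ^ 2 := sq_nonneg b
      have hw2 : w ^ 2 = 0 := by nlinarith
      have hb2 : b ^ 2 = 0 := by rw [hw2] at hcon; nlinarith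
      have hw0 : w = 0 := by simpa using hw2
      have hb0 : b = 0 := by simpa using hb2
      apply hx
      have e0 : x 0 * q = c 0 * b + v1 * w := by rw [hq, hb, hw]; ring
      have e1 : x 1 * q = c 1 * b - v0 * w := by rw [hq, hb, hw]; ring
      ext i
      fin_cases i
      · simpa [hw0, hb0, hq0] using e0
      · simpa [hw0, hb0, hq0] using e1
    have e : star x ⬝ᵥ (M - (2 / q) • vecMulVec (M.mulVec c) (M.mulVec c)).mulVec x
        = ((M 0 0 * M 1 1 - M 0 1 * M 0 1) * w ^ 2 - b ^ 2) / q := by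
      simp only [dotProduct, mulVec, Fin.sum_univ_two, hs, vecMulVec_apply, Matrix.sub_apply,
        Matrix.smul_apply, smul_eq_mul, Pi.star_apply, star_trivial, ← hv0, ← hv1]
      have e2 : (M 0 0 * M 1 1 - M 0 1 * M 0 1) * w ^ 2
          = (M 0 0 * x 0 ^ 2 + 2 * M 0 1 * x 0 * x 1 + M 1 1 * x 1 ^ 2) * q - b ^ 2 := by
        rw [hq, hb, hw, hv0, hv1]; ring
      rw [e2, hb]
      field_simp
      ring
    rw [e]
    exact div_pos_of_neg_of_neg key hc
end
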